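/- There exist constants C > 0 and y₀ < 0 such that for all y ≤ y₀, | A(y) − (1/(2√(2π))) |y| e^{−2y²} − (1/(4√(2π))) (log|y|/|y|) e^{−2y²} − (1/(4√(2π))) ((γ − 1)/2 + log 2) e^{−2y²}/|y| | ≤ C e^{−2y²}/y², where γ is the Euler–Mascheroni constant. -/

import Mathlib

open MeasureTheory Real Filter

/-- The error function `erf`. -/
noncomputable def erf (x : ℝ) : ℝ := (2 / Real.sqrt Real.pi) * ∫ t in (0 : ℝ)..x, Real.exp (-t ^ 2)

/-- The complementary error function `erfc`. -/
noncomputable def erfc (x : ℝ) : ℝ := 1 - erf x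

noncomputable def A₁ (y : ℝ) : ℝ :=
  -(1 / (2 * Real.sqrt (2 * Real.pi))) *
    ∫ t in Set.Ioi (0 : ℝ), Real.exp (-2 * (t - y) ^ 2) * erfc t

noncomputable def A₂ (y : ℝ) : ℝ :=
  (1 / Real.sqrt (2 * Real.pi)) *
    ∫ t in Set.Ioi (0 : ℝ),
      Real.exp (-2 * (t - y) ^ 2) * t * (Real.exp (-t ^ 2) / Real.sqrt Real.pi - t * erfc t)

noncomputable def A₃ (y : ℝ) : ℝ :=
  (1 / 4) * (1 + erf (Real.sqrt 2 * y)) *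
    (-(y * Real.exp (-2 * y ^ 2)) / Real.sqrt (2 * Real.pi) +
      (1 / 4 + y ^ 2) * (1 - erf (Real.sqrt 2 * y)))

noncomputable def A₄ (y : ℝ) : ℝ :=
  -(1 / Real.sqrt (2 * Real.pi)) *
    ∫ t₁ in Set.Ioi (0 : ℝ), ∫ t₂ in Set.Ioo (0 : ℝ) t₁,
      (1 / (t₁ - t₂)) *
        (Real.exp (-2 * (t₁ - y) ^ 2) * (erf (t₁ - t₂) + erf (Real.sqrt 2 * (t₂ - y))) +
          Real.exp (-2 * (t₂ - y) ^ 2) * (erf (t₁ - t₂) - erf (Real.sqrt 2 * (t₁ - y))))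

noncomputable def A (y : ℝ) : ℝ := A₁ y + A₂ y + A₃ y + A₄ y

lemma ax_erf_hasDerivAt (x : ℝ) : HasDerivAt erf (2 / √π * exp (-x ^ 2)) x := by
  have hc : Continuous fun t : ℝ => exp (-t ^ 2) := by fun_prop
  exact (intervalIntegral.integral_hasDerivAt_right (hc.intervalIntegrable _ _)
    hc.stronglyMeasurable.stronglyMeasurableAtFilter hc.continuousAt).const_mul _

lemma ax_erf_continuous : Continuous erf :=
  continuous_iff_continuousAt.2 fun x => (ax_erf_hasDerivAt x).continuousAt

lemma ax_erf_zero : erf 0 = 0 := by simp [erf]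

lemma ax_erf_neg (x : ℝ) : erf (-x) = -erf x := by
  unfold erf
  have := intervalIntegral.integral_comp_neg (a := 0) (b := x) (fun t : ℝ => exp (-t ^ 2))
  simp only [neg_sq, neg_zero] at this
  rw [this, intervalIntegral.integral_symm]; ring

lemma ax_erf_tendsto : Tendsto erf atTop (nhds 1) := by
  have h1 := intervalIntegral_tendsto_integral_Ioi (μ := volume) (f := fun t : ℝ => exp (-t ^ 2)) 0
    (b := fun x : ℝ => x) (l := atTop)
    (by simpa using (integrable_exp_neg_mul_sq (b := 1) one_pos).integrableOn) tendsto_id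
  have h2 := integral_gaussian_Ioi 1
  simp only [neg_mul, one_mul, div_one] at h2
  rw [h2] at h1
  have h3 := h1.const_mul (2 / √π)
  have hp : √π ≠ 0 := by positivity
  have e : 2 / √π * (√π / 2) = 1 := by field_simp
  rw [e] at h3
  exact h3

lemma ax_erfc_hasDerivAt (x : ℝ) : HasDerivAt erfc (-(2 / √π * exp (-x ^ 2))) x := by
  exact (ax_erf_hasDerivAt x).const_sub 1

lemma ax_erfc_continuous : Continuous erfc := by
  unfold erfc; exact continuous_const.sub ax_erf_continuous

lemma ax_erfc_zero : erfc 0 = 1 := by simp [erfc, ax_erf_zero]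

lemma ax_erfc_tendsto : Tendsto erfc atTop (nhds 0) := by
  have h := ax_erf_tendsto.const_sub 1
  rw [sub_self] at h
  exact h

lemma ax_le_zero (D D' : ℝ → ℝ) (hD : ∀ x > 0, HasDerivAt D (D' x) x) (h' : ∀ x > 0, 0 ≤ D' x)
    (hl : Tendsto D atTop (nhds 0)) : ∀ x > 0, D x ≤ 0 := by
  intro x hx
  have hm : MonotoneOn D (Set.Ioi 0) := by
    apply monotoneOn_of_deriv_nonneg (convex_Ioi 0)
    · intro z hz; exact (hD z hz).continuousAt.continuousWithinAt
    · intro z hz; rw [interior_Ioi] at hz; exact (hD z hz).differentiableAt.differentiableWithinAt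
    · intro z hz; rw [interior_Ioi] at hz; rw [(hD z hz).deriv]; exact h' z hz
  apply ge_of_tendsto hl
  filter_upwards [eventually_ge_atTop x] with z hz
  exact hm hx (lt_of_lt_of_le hx hz) hz

lemma ax_erfc_antitone : Antitone erfc := by
  apply antitone_of_deriv_nonpos
  · intro x; exact (ax_erfc_hasDerivAt x).differentiableAt
  · intro x; rw [(ax_erfc_hasDerivAt x).deriv]; simp only [Left.neg_nonpos_iff]; positivity

lemma ax_erfc_nonneg (x : ℝ) : 0 ≤ erfc x := by
  apply le_of_tendsto ax_erfc_tendsto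
  filter_upwards [eventually_ge_atTop x] with z hz
  exact ax_erfc_antitone hz

lemma ax_erfc_le_one {x : ℝ} (hx : 0 ≤ x) : erfc x ≤ 1 := by
  rw [← ax_erfc_zero]; exact ax_erfc_antitone hx

lemma ax_erf_nonneg {x : ℝ} (hx : 0 ≤ x) : 0 ≤ erf x := by
  have := ax_erfc_le_one hx; unfold erfc at this; linarith

lemma ax_sqrtpi : 17 / 10 < √π := by
  rw [Real.lt_sqrt (by norm_num)]
  have := Real.pi_gt_d2; norm_num at *; linarith

lemma ax_two_div : 2 / √π ≤ 6 / 5 := by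
  have := ax_sqrtpi
  rw [div_le_div_iff₀ (by linarith) (by norm_num)]; linarith

lemma ax_erf_le {x : ℝ} (hx : 0 ≤ x) : erf x ≤ 2 * x := by
  have hm : MonotoneOn (fun x => 2 * x - erf x) (Set.Ici 0) := by
    have hd : ∀ x : ℝ, HasDerivAt (fun x => 2 * x - erf x) (2 * 1 - 2 / √π * exp (-x ^ 2)) x :=
      fun x => ((hasDerivAt_id x).const_mul 2).sub (ax_erf_hasDerivAt x)
    apply monotoneOn_of_deriv_nonneg (convex_Ici 0)
    · intro z hz; exact (hd z).continuousAt.continuousWithinAt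
    · intro z hz; exact (hd z).differentiableAt.differentiableWithinAt
    · intro z hz; rw [(hd z).deriv]
      have h1 : exp (-z ^ 2) ≤ 1 := exp_le_one_iff.2 (by nlinarith)
      have h2 := ax_two_div
      nlinarith [exp_pos (-z ^ 2)]
  have := hm (Set.mem_Ici.2 le_rfl) (Set.mem_Ici.2 hx) hx
  simp [ax_erf_zero] at this
  exact this

lemma ax_gauss_deriv (x : ℝ) : HasDerivAt (fun x : ℝ => exp (-x ^ 2)) (exp (-x ^ 2) * (-(2 * x))) x := by
  have := ((hasDerivAt_pow 2 x).neg).exp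
  simpa using this

lemma ax_gauss_tendsto : Tendsto (fun x : ℝ => exp (-x ^ 2)) atTop (nhds 0) := by
  apply tendsto_exp_neg_atTop_nhds_zero.comp
  exact tendsto_pow_atTop (by norm_num)

/-- first Mills bound -/
lemma ax_mills1 {x : ℝ} (hx : 0 < x) : erfc x ≤ exp (-x ^ 2) / √π * (1 / x) := by
  have hp : √π ≠ 0 := by positivity
  have := ax_le_zero (fun x => erfc x - exp (-x ^ 2) / √π * (x⁻¹))
    (fun x => exp (-x ^ 2) / √π * (1 / x ^ 2)) ?_ ?_ ?_ x hx
  · simp only [one_div]; linarith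
  · intro z hz
    have h := (ax_erfc_hasDerivAt z).sub (((ax_gauss_deriv z).div_const (√π)).mul (hasDerivAt_inv hz.ne'))
    refine h.congr_deriv ?_
    have := hz.ne'
    field_simp
    ring
  · intro z hz; positivity
  · have := ax_erfc_tendsto.sub ((ax_gauss_tendsto.div_const (√π)).mul tendsto_inv_atTop_zero)
    simpa using this

lemma ax_mills2 {x : ℝ} (hx : 0 < x) :
    exp (-x ^ 2) / √π * (1 / x - 1 / (2 * x ^ 3)) ≤ erfc x := by
  have hp : √π ≠ 0 := by positivity
  have := ax_le_zero (fun x => exp (-x ^ 2) / √π * (x⁻¹ - 1 / 2 * (x⁻¹) ^ 3) - erfc x)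
    (fun x => exp (-x ^ 2) / √π * (3 / 2 / x ^ 4)) ?_ ?_ ?_ x hx
  · have e : 1 / x - 1 / (2 * x ^ 3) = (x⁻¹ - 1 / 2 * (x⁻¹) ^ 3) := by field_simp
    rw [e]; linarith
  · intro z hz
    have hi := hasDerivAt_inv (𝕜 := ℝ) hz.ne'
    have h := (((ax_gauss_deriv z).div_const (√π)).mul (hi.sub ((hi.pow 3).const_mul (1/2)))).sub (ax_erfc_hasDerivAt z)
    refine h.congr_deriv ?_
    have := hz.ne'
    simp
    field_simp
    ring
  · intro z hz; positivity
  · have hi : Tendsto (fun x : ℝ => x⁻¹) atTop (nhds 0) := tendsto_inv_atTop_zero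
    have := ((ax_gauss_tendsto.div_const (√π)).mul (hi.sub ((hi.pow 3).const_mul (1/2)))).sub ax_erfc_tendsto
    simpa using this

lemma ax_mills3 {x : ℝ} (hx : 0 < x) :
    erfc x ≤ exp (-x ^ 2) / √π * (1 / x - 1 / (2 * x ^ 3) + 3 / (4 * x ^ 5)) := by
  have hp : √π ≠ 0 := by positivity
  have := ax_le_zero (fun x => erfc x - exp (-x ^ 2) / √π * (x⁻¹ - 1 / 2 * (x⁻¹) ^ 3 + 3 / 4 * (x⁻¹) ^ 5))
    (fun x => exp (-x ^ 2) / √π * (15 / 4 / x ^ 6)) ?_ ?_ ?_ x hx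
  · have e : 1 / x - 1 / (2 * x ^ 3) + 3 / (4 * x ^ 5) =
      (x⁻¹ - 1 / 2 * (x⁻¹) ^ 3 + 3 / 4 * (x⁻¹) ^ 5) := by field_simp
    rw [e]; linarith
  · intro z hz
    have hi := hasDerivAt_inv (𝕜 := ℝ) hz.ne'
    have h := (ax_erfc_hasDerivAt z).sub (((ax_gauss_deriv z).div_const (√π)).mul
      ((hi.sub ((hi.pow 3).const_mul (1/2))).add ((hi.pow 5).const_mul (3/4))))
    refine h.congr_deriv ?_
    have := hz.ne'
    simp
    field_simp
    ring
  · intro z hz; positivity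
  · have hi : Tendsto (fun x : ℝ => x⁻¹) atTop (nhds 0) := tendsto_inv_atTop_zero
    have := ax_erfc_tendsto.sub ((ax_gauss_tendsto.div_const (√π)).mul
      ((hi.sub ((hi.pow 3).const_mul (1/2))).add ((hi.pow 5).const_mul (3/4))))
    simpa using this

noncomputable def axM (x : ℝ) : ℝ := erfc x * exp (x ^ 2)

lemma axM_deriv (x : ℝ) : HasDerivAt axM (2 * x * axM x - 2 / √π) x := by
  have h1 : HasDerivAt (fun x : ℝ => exp (x ^ 2)) (exp (x ^ 2) * (2 * x)) x := by
    simpa using (hasDerivAt_pow 2 x).exp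
  have h := (ax_erfc_hasDerivAt x).mul h1
  refine h.congr_deriv ?_
  have : exp (-x ^ 2) * exp (x ^ 2) = 1 := by rw [← exp_add]; simp
  unfold axM
  linear_combination (-(2 / √π)) * this

lemma axM_le {x : ℝ} (hx : 0 ≤ x) : x * axM x ≤ 1 / √π := by
  rcases hx.eq_or_lt with rfl | hx
  · simp
  have h := mul_le_mul_of_nonneg_right (ax_mills1 hx) (exp_pos (x ^ 2)).le
  have e : exp (-x ^ 2) * exp (x ^ 2) = 1 := by rw [← exp_add]; simp
  have e2 : exp (-x ^ 2) / √π * (1 / x) * exp (x ^ 2) = 1 / √π * (1 / x) := by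
    linear_combination (1 / √π * (1 / x)) * e
  rw [e2] at h
  have h' := mul_le_mul_of_nonneg_left h hx.le
  unfold axM
  refine h'.trans (le_of_eq ?_)
  field_simp

lemma axM_nonneg (x : ℝ) : 0 ≤ axM x := mul_nonneg (ax_erfc_nonneg x) (exp_pos _).le

lemma axM_lip {x z : ℝ} (hx : 0 ≤ x) (hz : 0 ≤ z) : |axM x - axM z| ≤ 6 / 5 * |x - z| := by
  have := (convex_Ici (0:ℝ)).norm_image_sub_le_of_norm_hasDerivWithin_le (f := axM)
    (f' := fun x => 2 * x * axM x - 2 / √π) (C := 6 / 5) (x := z) (y := x)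
    (fun w _ => (axM_deriv w).hasDerivWithinAt) ?_ hz hx
  · simpa using this
  · intro w hw
    have h1 := axM_le hw
    have h2 := mul_nonneg (Set.mem_Ici.1 hw) (axM_nonneg w)
    have h3 := ax_two_div
    have e : 2 / √π = 2 * (1 / √π) := by ring
    rw [Real.norm_eq_abs, abs_le]
    constructor <;> nlinarith

lemma ax_erfc_le_gauss {x : ℝ} (hx : 0 ≤ x) : erfc x ≤ exp (-x ^ 2) := by
  have hm : AntitoneOn axM (Set.Ici 0) := by
    apply antitoneOn_of_deriv_nonpos (convex_Ici 0)
    · intro z hz; exact (axM_deriv z).continuousAt.continuousWithinAt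
    · intro z hz; exact (axM_deriv z).differentiableAt.differentiableWithinAt
    · intro z hz; rw [(axM_deriv z).deriv]
      rw [interior_Ici] at hz
      have h1 := axM_le (le_of_lt hz)
      have e : 2 / √π = 2 * (1 / √π) := by ring
      nlinarith
  have h := hm (Set.mem_Ici.2 le_rfl) (Set.mem_Ici.2 hx) hx
  have e0 : axM 0 = 1 := by simp [axM, ax_erfc_zero]
  rw [e0] at h
  unfold axM at h
  rw [exp_neg, ← one_div, le_div_iff₀ (exp_pos _)]
  exact h

lemma ax_exp_quarter : exp (1 / 4 : ℝ) ≤ 2 := by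
  have h : exp (1 / 4 : ℝ) ^ 4 = exp 1 := by rw [← exp_nat_mul]; norm_num
  have h1 := exp_one_lt_d9
  by_contra hc
  push Not at hc
  have : (2:ℝ) ^ 4 < exp (1 / 4 : ℝ) ^ 4 := pow_lt_pow_left₀ hc (by norm_num) (by norm_num)
  rw [h] at this
  linarith

lemma ax_erfc_le_exp {x : ℝ} (hx : 0 ≤ x) : erfc x ≤ 2 * exp (-x) := by
  refine (ax_erfc_le_gauss hx).trans ?_
  have : exp (-x ^ 2) ≤ exp (1 / 4 : ℝ) * exp (-x) := by
    rw [← exp_add]; apply exp_le_exp.2; nlinarith [sq_nonneg (x - 1 / 2)]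
  exact this.trans (mul_le_mul_of_nonneg_right ax_exp_quarter (exp_pos _).le)

lemma ax_int_log_exp : ∫ t in Set.Ioi (0:ℝ), log t * exp (-t) = -eulerMascheroniConstant := by
  have h1 := Complex.hasDerivAt_GammaIntegral (s := 1) (by simp)
  have h2 : HasDerivAt Complex.GammaIntegral (-(eulerMascheroniConstant : ℂ)) 1 := by
    refine Complex.hasDerivAt_Gamma_one.congr_of_eventuallyEq ?_
    have : {z : ℂ | 0 < z.re} ∈ nhds (1:ℂ) :=
      (isOpen_lt continuous_const Complex.continuous_re).mem_nhds (by simp)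
    filter_upwards [this] with z hz
    exact (Complex.Gamma_eq_integral hz).symm
  have h3 := h1.unique h2
  have h4 : (∫ t : ℝ in Set.Ioi 0, (t:ℂ) ^ ((1:ℂ) - 1) * (Real.log t * Real.exp (-t)))
      = ((∫ t in Set.Ioi (0:ℝ), log t * exp (-t) : ℝ) : ℂ) := by
    rw [← integral_complex_ofReal]
    apply setIntegral_congr_fun measurableSet_Ioi
    intro t ht
    simp
  rw [h4] at h3
  exact_mod_cast h3

lemma ax_int_log_gauss : ∫ t in Set.Ioi (0:ℝ), log t * exp (-t ^ 2)
    = -(√π / 4) * (eulerMascheroniConstant + 2 * log 2) := by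
  have h1 := Complex.hasDerivAt_GammaIntegral (s := 1 / 2) (by norm_num)
  have h2 : HasDerivAt Complex.GammaIntegral (-√π * (eulerMascheroniConstant + 2 * Complex.log 2)) (1/2) := by
    refine Complex.hasDerivAt_Gamma_one_half.congr_of_eventuallyEq ?_
    have : {z : ℂ | 0 < z.re} ∈ nhds (1/2:ℂ) :=
      (isOpen_lt continuous_const Complex.continuous_re).mem_nhds (by norm_num)
    filter_upwards [this] with z hz
    exact (Complex.Gamma_eq_integral hz).symm
  have h3 := h1.unique h2
  have h4 : (∫ t : ℝ in Set.Ioi 0, (t:ℂ) ^ ((1/2:ℂ) - 1) * (Real.log t * Real.exp (-t)))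
      = ((∫ t in Set.Ioi (0:ℝ), t ^ (-(1/2) : ℝ) * (log t * exp (-t)) : ℝ) : ℂ) := by
    rw [← integral_complex_ofReal]
    apply setIntegral_congr_fun measurableSet_Ioi
    intro t ht
    have e : (1/2:ℂ) - 1 = ((-(1/2) : ℝ) : ℂ) := by push_cast; norm_num
    simp only [e]
    rw [← Complex.ofReal_cpow (le_of_lt ht)]
    push_cast; rfl
  rw [h4] at h3
  have h5 : ∫ t in Set.Ioi (0:ℝ), t ^ (-(1/2) : ℝ) * (log t * exp (-t))
      = -√π * (eulerMascheroniConstant + 2 * log 2) := by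
    have e : Complex.log 2 = ((log 2 : ℝ) : ℂ) := by simp
    rw [e] at h3
    exact_mod_cast h3
  have h6 := integral_comp_rpow_Ioi_of_pos (g := fun t : ℝ => t ^ (-(1/2) : ℝ) * (log t * exp (-t))) (p := 2) two_pos
  rw [h5] at h6
  have h7 : ∫ t in Set.Ioi (0:ℝ), 4 * (log t * exp (-t ^ 2)) = -√π * (eulerMascheroniConstant + 2 * log 2) := by
    rw [← h6]
    apply setIntegral_congr_fun measurableSet_Ioi
    intro t ht
    have ht' : (0:ℝ) < t := ht
    have e1 : (t ^ (2:ℝ)) = t ^ 2 := by norm_cast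
    have e2 : (t ^ 2 : ℝ) ^ (-(1/2) : ℝ) = t⁻¹ := by
      rw [← e1, ← rpow_mul ht'.le]; norm_num
      rw [rpow_neg_one]
    have e3 : t ^ ((2:ℝ) - 1) = t := by norm_num
    simp only [smul_eq_mul]
    rw [e1, e2, e3, log_pow]
    push_cast
    field_simp
    ring
  rw [integral_const_mul] at h7
  linarith

lemma ax_integrable_log_exp : IntegrableOn (fun t : ℝ => log t * exp (-t)) (Set.Ioi 0) := by
  apply Integrable.of_integral_ne_zero
  rw [ax_int_log_exp]
  have := one_half_lt_eulerMascheroniConstant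
  linarith

lemma ax_integrable_log_gauss : IntegrableOn (fun t : ℝ => log t * exp (-t ^ 2)) (Set.Ioi 0) := by
  apply Integrable.of_integral_ne_zero
  rw [ax_int_log_gauss]
  have := one_half_lt_eulerMascheroniConstant
  have h2 : 0 < log 2 := log_pos (by norm_num)
  have h3 : 0 < √π := by positivity
  have : 0 < √π / 4 * (eulerMascheroniConstant + 2 * log 2) := by positivity
  linarith

lemma ax_int_exp {a : ℝ} (ha : 0 < a) : ∫ t in Set.Ioi (0:ℝ), exp (-(a * t)) = 1 / a := by
  have := integral_exp_mul_Ioi (a := -a) (by linarith) 0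
  simp only [mul_zero, exp_zero] at this
  simp only [← neg_mul]
  rw [this]; field_simp

lemma ax_integrable_exp {a : ℝ} (ha : 0 < a) : IntegrableOn (fun t => exp (-(a * t))) (Set.Ioi 0) := by
  apply Integrable.of_integral_ne_zero
  rw [ax_int_exp ha]; positivity

lemma ax_int_mul_exp {a : ℝ} (ha : 0 < a) : ∫ t in Set.Ioi (0:ℝ), t * exp (-(a * t)) = 1 / a ^ 2 := by
  have := integral_rpow_mul_exp_neg_mul_Ioi (a := 2) (r := a) two_pos ha
  norm_num at this
  rw [this]; simp

lemma ax_integrable_mul_exp {a : ℝ} (ha : 0 < a) :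
    IntegrableOn (fun t => t * exp (-(a * t))) (Set.Ioi 0) := by
  apply Integrable.of_integral_ne_zero
  rw [ax_int_mul_exp ha]; positivity

lemma ax_log_exp_a {a : ℝ} (ha : 1 ≤ a) :
    ∫ t in Set.Ioi (0:ℝ), log t * (a * exp (-(a * t))) = -eulerMascheroniConstant - log a := by
  have ha0 : 0 < a := by linarith
  have h := integral_comp_mul_left_Ioi (fun t : ℝ => (log t - log a) * exp (-t)) 0 ha0
  rw [mul_zero] at h
  have h1 : ∫ t in Set.Ioi (0:ℝ), (log t - log a) * exp (-t) = -eulerMascheroniConstant - log a := by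
    have i1 := ax_integrable_exp one_pos
    have i2 := ax_int_exp one_pos
    simp only [one_mul, div_one] at i1 i2
    simp only [sub_mul]
    rw [integral_sub ax_integrable_log_exp (i1.const_mul _), integral_const_mul, i2, ax_int_log_exp, mul_one]
  rw [h1] at h
  have h2 : ∫ t in Set.Ioi (0:ℝ), log t * (a * exp (-(a * t))) =
      ∫ t in Set.Ioi (0:ℝ), a * ((log (a * t) - log a) * exp (-(a * t))) := by
    apply setIntegral_congr_fun measurableSet_Ioi
    intro t ht
    simp only
    rw [log_mul ha0.ne' (ne_of_gt ht)]; ring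
  rw [h2, integral_const_mul, h, smul_eq_mul]
  field_simp

lemma ax_integrable_log_exp_a {a : ℝ} (ha : 1 ≤ a) :
    IntegrableOn (fun t : ℝ => log t * (a * exp (-(a * t)))) (Set.Ioi 0) := by
  apply Integrable.of_integral_ne_zero
  rw [ax_log_exp_a ha]
  have := one_half_lt_eulerMascheroniConstant
  have := log_nonneg ha
  linarith

lemma ax_integrable_of_bound {f b : ℝ → ℝ} (hf : Measurable f) (hb : IntegrableOn b (Set.Ioi 0))
    (h : ∀ t > 0, |f t| ≤ b t) : IntegrableOn f (Set.Ioi 0) := by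
  refine Integrable.mono' hb hf.aestronglyMeasurable ?_
  filter_upwards [ae_restrict_mem measurableSet_Ioi] with t ht
  exact h t ht

lemma ax_erf_measurable : Measurable erf := ax_erf_continuous.measurable
lemma ax_erfc_measurable : Measurable erfc := ax_erfc_continuous.measurable

lemma ax_one_sub_exp {x : ℝ} : 1 - exp (-x) ≤ x := by
  have := add_one_le_exp (-x); linarith

noncomputable def axL (a : ℝ) : ℝ := ∫ u in Set.Ioi (0:ℝ), erfc u * (1 - exp (-(a * u))) / u

lemma axL_integrand_bound {a u : ℝ} (ha : 0 < a) (hu : 0 < u) :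
    |erfc u * (1 - exp (-(a * u))) / u| ≤ 2 * a * exp (-(1 * u)) := by
  have h1 : 0 ≤ 1 - exp (-(a * u)) := by
    have : exp (-(a * u)) ≤ 1 := exp_le_one_iff.2 (by nlinarith [mul_pos ha hu])
    linarith
  have h2 : 1 - exp (-(a * u)) ≤ a * u := ax_one_sub_exp
  have h3 := ax_erfc_nonneg u
  have h4 := ax_erfc_le_exp hu.le
  rw [abs_of_nonneg (by positivity), div_le_iff₀ hu, one_mul]
  calc erfc u * (1 - exp (-(a * u))) ≤ (2 * exp (-u)) * (a * u) :=
        mul_le_mul h4 h2 h1 (by positivity)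
    _ = _ := by ring

lemma axL_integrable {a : ℝ} (ha : 0 < a) :
    IntegrableOn (fun u => erfc u * (1 - exp (-(a * u))) / u) (Set.Ioi 0) := by
  have := ax_erfc_measurable
  exact ax_integrable_of_bound (by fun_prop) ((ax_integrable_exp one_pos).const_mul (2 * a))
    (fun u hu => axL_integrand_bound ha hu)

lemma ax_erf_div_bound {u : ℝ} (hu : 0 < u) : |erf u / u| ≤ 2 := by
  rw [abs_of_nonneg (div_nonneg (ax_erf_nonneg hu.le) hu.le), div_le_iff₀ hu]
  exact ax_erf_le hu.le

lemma ax_tendsto_zero_of_abs_le {f g : ℝ → ℝ} {l : Filter ℝ} (h : ∀ᶠ x in l, |f x| ≤ g x)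
    (hg : Tendsto g l (nhds 0)) : Tendsto f l (nhds 0) :=
  squeeze_zero_norm' h hg

lemma axL_asymp {a : ℝ} (ha : 1 ≤ a) :
    |axL a - (log a + eulerMascheroniConstant / 2 - log 2)| ≤ 2 / a := by
  have ha0 : 0 < a := by linarith
  have hm := ax_erf_measurable
  have hmc := ax_erfc_measurable
  have e_bound : ∀ u > 0, |erf u * exp (-(a * u)) / u| ≤ 2 * exp (-(a * u)) := by
    intro u hu
    have e : erf u * exp (-(a * u)) / u = erf u / u * exp (-(a * u)) := by ring
    rw [e, abs_mul, abs_of_pos (exp_pos _)]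
    exact mul_le_mul_of_nonneg_right (ax_erf_div_bound hu) (exp_pos _).le
  have iE : IntegrableOn (fun u => erf u * exp (-(a * u)) / u) (Set.Ioi 0) :=
    ax_integrable_of_bound (by fun_prop) ((ax_integrable_exp ha0).const_mul 2) e_bound
  have bE : |∫ u in Set.Ioi (0:ℝ), erf u * exp (-(a * u)) / u| ≤ 2 / a := by
    have : ‖∫ u in Set.Ioi (0:ℝ), erf u * exp (-(a * u)) / u‖ ≤ ∫ u in Set.Ioi (0:ℝ), 2 * exp (-(a * u)) := by
      apply norm_integral_le_of_norm_le ((ax_integrable_exp ha0).const_mul 2)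
      filter_upwards [ae_restrict_mem measurableSet_Ioi] with t ht
      exact e_bound t ht
    rw [integral_const_mul, ax_int_exp ha0] at this
    rw [← Real.norm_eq_abs]
    refine this.trans (le_of_eq (by ring))
  -- the difference
  have hsplit : axL a = (∫ u in Set.Ioi (0:ℝ), (erfc u - exp (-(a * u))) * u⁻¹)
      + ∫ u in Set.Ioi (0:ℝ), erf u * exp (-(a * u)) / u := by
    rw [← sub_eq_iff_eq_add]
    unfold axL
    rw [← integral_sub (axL_integrable ha0) iE]
    apply setIntegral_congr_fun measurableSet_Ioi
    intro u hu
    simp only [erfc]; ring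
  have iD : IntegrableOn (fun u => (erfc u - exp (-(a * u))) * u⁻¹) (Set.Ioi 0) := by
    refine ((axL_integrable ha0).sub iE).congr ?_
    filter_upwards with u
    simp only [erfc, Pi.sub_apply]; ring
  have hfb : ∀ u > 0, |erfc u - exp (-(a * u))| ≤ (2 + a) * u := by
    intro u hu
    have h1 : erf u ≤ 2 * u := ax_erf_le hu.le
    have h2 : 1 - exp (-(a * u)) ≤ a * u := ax_one_sub_exp
    have h3 := ax_erf_nonneg hu.le
    have h4 : exp (-(a * u)) ≤ 1 := exp_le_one_iff.2 (by nlinarith [mul_pos ha0 hu])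
    have := mul_pos ha0 hu
    unfold erfc
    rw [abs_le]; constructor <;> nlinarith
  have hfb2 : ∀ u > 0, |erfc u - exp (-(a * u))| ≤ 2 * exp (-u) := by
    intro u hu
    have h1 := ax_erfc_le_exp hu.le
    have h3 := ax_erfc_nonneg u
    have h4 : exp (-(a * u)) ≤ exp (-u) := exp_le_exp.2 (by nlinarith)
    have h5 := exp_pos (-(a * u))
    have h6 := exp_pos (-u)
    rw [abs_le]; constructor <;> linarith
  have key := integral_Ioi_mul_deriv_eq_deriv_mul (a := 0) (a' := 0) (b' := 0)
    (u := fun u => erfc u - exp (-(a * u))) (v := fun u => log u) (v' := fun u => u⁻¹)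
    (u' := fun u => -(2 / √π * exp (-u ^ 2)) - exp (-(a * u)) * (-(a * 1))) ?_ ?_ iD ?_ ?_ ?_
  · have e2 : ∫ u in Set.Ioi (0:ℝ), (-(2 / √π * exp (-u ^ 2)) - exp (-(a * u)) * (-(a * 1))) * log u
        = (-eulerMascheroniConstant - log a) - 2 / √π * (-(√π / 4) * (eulerMascheroniConstant + 2 * log 2)) := by
      rw [← ax_log_exp_a ha, ← ax_int_log_gauss, ← integral_const_mul,
        ← integral_sub (ax_integrable_log_exp_a ha) (ax_integrable_log_gauss.const_mul _)]
      congr 1; ext u; ring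
    rw [e2] at key
    rw [hsplit, key]
    have hp : √π ≠ 0 := by positivity
    have e3 : 2 / √π * (-(√π / 4) * (eulerMascheroniConstant + 2 * log 2)) =
      -(eulerMascheroniConstant / 2 + log 2) := by field_simp; ring
    rw [e3]
    refine le_trans (le_of_eq ?_) bE
    congr 1; ring
  · intro x hx
    have h1 : HasDerivAt (fun u => exp (-(a * u))) (exp (-(a * x)) * (-(a * 1))) x :=
      (((hasDerivAt_id x).const_mul a).neg).exp
    exact (ax_erfc_hasDerivAt x).sub h1
  · intro x hx; exact hasDerivAt_log (ne_of_gt hx)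
  · have := (ax_integrable_log_exp_a ha).sub (ax_integrable_log_gauss.const_mul (2 / √π))
    refine this.congr ?_
    filter_upwards with u
    simp; ring
  · have h0 : Tendsto (fun x : ℝ => (2 + a) * |log x * x|) (nhdsWithin 0 (Set.Ioi 0)) (nhds 0) := by
      have := (tendsto_log_mul_rpow_nhdsGT_zero (r := 1) one_pos)
      simp only [rpow_one] at this
      simpa using this.abs.const_mul (2 + a)
    refine ax_tendsto_zero_of_abs_le ?_ h0
    filter_upwards [self_mem_nhdsWithin] with x hx
    have hx' : (0:ℝ) < x := hx
    simp only [Pi.mul_apply, abs_mul, abs_of_pos hx']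
    have := mul_le_mul_of_nonneg_right (hfb x hx) (abs_nonneg (log x))
    linarith
  · have h0 : Tendsto (fun x : ℝ => 2 * (x ^ 1 * exp (-x))) atTop (nhds 0) := by
      simpa using (tendsto_pow_mul_exp_neg_atTop_nhds_zero 1).const_mul 2
    refine ax_tendsto_zero_of_abs_le ?_ h0
    filter_upwards [eventually_ge_atTop 1] with x hx
    have hx' : (0:ℝ) < x := by linarith
    simp only [Pi.mul_apply, abs_mul]
    have h1 := log_nonneg hx
    have h2 := log_le_sub_one_of_pos hx'
    rw [abs_of_nonneg h1]
    calc _ ≤ (2 * exp (-x)) * x := mul_le_mul (hfb2 x hx') (by linarith) h1 (by positivity)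
      _ = _ := by ring

noncomputable def axpsi (a u : ℝ) : ℝ := erfc u * (exp (a * u) - 1) / u

lemma axpsi_measurable (a : ℝ) : Measurable (axpsi a) := by
  have := ax_erfc_measurable
  unfold axpsi; fun_prop

lemma axpsi_bound {a u : ℝ} (ha : 0 < a) (hu : 0 < u) :
    |axpsi a u| ≤ a * exp ((a + 1) ^ 2 / 4) * exp (-(1 * u)) := by
  have hau := mul_pos ha hu
  have h1 : 0 ≤ exp (a * u) - 1 := by
    have := one_le_exp hau.le
    linarith
  have h2 : exp (a * u) - 1 ≤ a * u * exp (a * u) := by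
    have h := mul_le_mul_of_nonneg_right (ax_one_sub_exp (x := a * u)) (exp_pos (a * u)).le
    rw [sub_mul, ← exp_add] at h
    simpa using h
  have h3 := ax_erfc_nonneg u
  have h4 := ax_erfc_le_gauss hu.le
  unfold axpsi
  rw [abs_of_nonneg (by positivity), div_le_iff₀ hu]
  calc erfc u * (exp (a * u) - 1) ≤ exp (-u ^ 2) * (a * u * exp (a * u)) :=
        mul_le_mul h4 h2 h1 (by positivity)
    _ = a * u * exp (-u ^ 2 + a * u) := by rw [exp_add]; ring
    _ ≤ a * u * exp ((a + 1) ^ 2 / 4 + -(1 * u)) := by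
        apply mul_le_mul_of_nonneg_left _ hau.le
        apply exp_le_exp.2
        nlinarith [sq_nonneg (u - (a + 1) / 2)]
    _ = _ := by rw [exp_add]; ring

lemma axpsi_integrable {a : ℝ} (ha : 0 < a) : IntegrableOn (axpsi a) (Set.Ioi 0) :=
  ax_integrable_of_bound (axpsi_measurable a)
    ((ax_integrable_exp one_pos).const_mul (a * exp ((a + 1) ^ 2 / 4))) (fun _ hu => axpsi_bound ha hu)

noncomputable def axP (a t : ℝ) : ℝ := ∫ u in (0:ℝ)..t, axpsi a u

lemma axpsi_ii {a : ℝ} (ha : 0 < a) {t : ℝ} (ht : 0 ≤ t) : IntervalIntegrable (axpsi a) volume 0 t := by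
  rw [intervalIntegrable_iff_integrableOn_Ioc_of_le ht]
  exact (axpsi_integrable ha).mono_set Set.Ioc_subset_Ioi_self

lemma axP_deriv {a : ℝ} (ha : 0 < a) {t : ℝ} (ht : 0 < t) : HasDerivAt (axP a) (axpsi a t) t := by
  apply intervalIntegral.integral_hasDerivAt_right (axpsi_ii ha ht.le)
  · exact (axpsi_measurable a).stronglyMeasurable.stronglyMeasurableAtFilter
  · have := ax_erfc_continuous.continuousAt (x := t)
    unfold axpsi
    fun_prop (disch := exact ht.ne')

lemma axP_bound {a : ℝ} (ha : 0 < a) {t : ℝ} (ht : 0 < t) :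
    |axP a t| ≤ (∫ u in Set.Ioi (0:ℝ), |axpsi a u|) := by
  unfold axP
  rw [intervalIntegral.integral_of_le ht.le, ← Real.norm_eq_abs]
  refine (norm_integral_le_integral_norm _).trans ?_
  apply setIntegral_mono_set (axpsi_integrable ha).norm
  · filter_upwards with x; positivity
  · exact Set.Ioc_subset_Ioi_self.eventuallyLE

lemma axP_tendsto {a : ℝ} (ha : 0 < a) : Tendsto (axP a) (nhdsWithin 0 (Set.Ioi 0)) (nhds 0) := by
  have hb : ∀ t > 0, |axP a t| ≤ a * exp ((a + 1) ^ 2 / 4) * |t| := by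
    intro t ht
    have := intervalIntegral.norm_integral_le_of_norm_le_const (a := 0) (b := t) (f := axpsi a)
      (C := a * exp ((a + 1) ^ 2 / 4)) ?_
    · simpa [axP] using this
    · intro x hx
      rw [Set.uIoc_of_le ht.le] at hx
      refine (axpsi_bound ha hx.1).trans ?_
      have : exp (-(1 * x)) ≤ 1 := exp_le_one_iff.2 (by linarith [hx.1])
      exact mul_le_of_le_one_right (by positivity) this
  refine ax_tendsto_zero_of_abs_le (g := fun t => a * exp ((a + 1) ^ 2 / 4) * |t|) ?_ ?_
  · filter_upwards [self_mem_nhdsWithin] with x hx using hb x hx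
  · have : Continuous fun t : ℝ => a * exp ((a + 1) ^ 2 / 4) * |t| := by fun_prop
    have h := this.tendsto 0
    simp only [abs_zero, mul_zero] at h
    exact h.mono_left nhdsWithin_le_nhds

lemma axP_integrable {a : ℝ} (ha : 0 < a) :
    IntegrableOn (fun t => axP a t * exp (-(a * t))) (Set.Ioi 0) := by
  refine Integrable.mono' ((ax_integrable_exp ha).const_mul (∫ u in Set.Ioi (0:ℝ), |axpsi a u|)) ?_ ?_
  · apply ContinuousOn.aestronglyMeasurable _ measurableSet_Ioi
    intro t ht
    have h1 := (axP_deriv ha ht).continuousAt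
    have h2 : ContinuousAt (fun t => exp (-(a * t))) t := by fun_prop
    exact (h1.mul h2).continuousWithinAt
  · filter_upwards [ae_restrict_mem measurableSet_Ioi] with t ht
    rw [norm_mul, Real.norm_eq_abs, Real.norm_eq_abs, abs_of_pos (exp_pos _)]
    exact mul_le_mul_of_nonneg_right (axP_bound ha ht) (exp_pos _).le

lemma axP_integral {a : ℝ} (ha : 0 < a) :
    ∫ t in Set.Ioi (0:ℝ), axP a t * exp (-(a * t)) = axL a / a := by
  have hpsi : ∀ t, axpsi a t * (-(1 / a) * exp (-(a * t))) = -(1 / a) * (erfc t * (1 - exp (-(a * t))) / t) := by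
    intro t
    have : exp (a * t) * exp (-(a * t)) = 1 := by rw [← exp_add]; simp
    unfold axpsi
    linear_combination (-(1 / a) * erfc t / t) * this
  have key := integral_Ioi_mul_deriv_eq_deriv_mul (a := 0) (a' := 0) (b' := 0)
    (u := axP a) (u' := axpsi a) (v := fun t => -(1 / a) * exp (-(a * t)))
    (v' := fun t => exp (-(a * t))) ?_ ?_ (axP_integrable ha) ?_ ?_ ?_
  · rw [key]
    simp only [hpsi]
    rw [integral_const_mul, axL]; ring
  · intro x hx; exact axP_deriv ha hx
  · intro x hx
    have h1 : HasDerivAt (fun u => exp (-(a * u))) (exp (-(a * x)) * (-(a * 1))) x :=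
      (((hasDerivAt_id x).const_mul a).neg).exp
    refine (h1.const_mul (-(1 / a))).congr_deriv ?_
    field_simp
  · have := (axL_integrable ha).const_mul (-(1 / a))
    refine this.congr ?_
    filter_upwards with t
    exact (hpsi t).symm
  · have h2 : Continuous (fun t => -(1 / a) * exp (-(a * t))) := by fun_prop
    have := (axP_tendsto ha).mul ((h2.tendsto 0).mono_left nhdsWithin_le_nhds)
    rw [zero_mul] at this
    exact this
  · have h0 : Tendsto (fun t => (∫ u in Set.Ioi (0:ℝ), |axpsi a u|) * (1 / a * exp (-(a * t)))) atTop (nhds 0) := by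
      have := tendsto_exp_neg_atTop_nhds_zero.comp (tendsto_id.const_mul_atTop ha)
      have := (this.const_mul (1 / a)).const_mul (∫ u in Set.Ioi (0:ℝ), |axpsi a u|)
      simpa using this
    refine ax_tendsto_zero_of_abs_le ?_ h0
    filter_upwards [eventually_gt_atTop 0] with t ht
    simp only [Pi.mul_apply, abs_mul, abs_neg, abs_of_pos (exp_pos _), abs_of_pos (one_div_pos.2 ha)]
    exact mul_le_mul_of_nonneg_right (axP_bound ha ht) (by positivity)

noncomputable def axg (s t : ℝ) : ℝ := exp (-(4 * s * t) - 2 * t ^ 2)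

lemma axg_eq (s t : ℝ) : exp (-2 * (t - -s) ^ 2) = exp (-2 * s ^ 2) * axg s t := by
  unfold axg; rw [← exp_add]; congr 1; ring

lemma axg_pos (s t : ℝ) : 0 < axg s t := exp_pos _

lemma axg_le (s t : ℝ) : axg s t ≤ exp (-(4 * s * t)) :=
  exp_le_exp.2 (by nlinarith [sq_nonneg t])

noncomputable def axd (s t : ℝ) : ℝ := axg s t - exp (-(4 * s * t))

lemma ax_pow_exp {x : ℝ} (hx : 0 ≤ x) : x * exp (-x) ≤ 1 ∧ x ^ 2 * exp (-x) ≤ 2 := by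
  have h1 := quadratic_le_exp_of_nonneg hx
  have e : exp x * exp (-x) = 1 := by rw [← exp_add]; simp
  have hp := exp_pos (-x)
  have h2 := mul_le_mul_of_nonneg_right h1 hp.le
  rw [e] at h2
  have := mul_nonneg hx hp.le
  have := mul_nonneg (sq_nonneg x) hp.le
  constructor <;> nlinarith

lemma axd_deriv (s t : ℝ) : HasDerivAt (axd s)
    (axg s t * (-(4 * s) - 4 * t) - exp (-(4 * s * t)) * (-(4 * s))) t := by
  have h1 : HasDerivAt (fun t => exp (-(4 * s * t))) (exp (-(4 * s * t)) * (-(4 * s))) t := by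
    have := (((hasDerivAt_id t).const_mul (4 * s)).neg).exp
    simpa using this
  have h2 : HasDerivAt (fun t => axg s t) (axg s t * (-(4 * s) - 4 * t)) t := by
    have := (((hasDerivAt_id t).const_mul (4 * s)).neg.sub ((hasDerivAt_pow 2 t).const_mul 2)).exp
    refine this.congr_deriv ?_
    simp [axg]; ring_nf
  exact h2.sub h1

lemma axd_deriv_bound {s t : ℝ} (hs : 1 ≤ s) (ht : 0 ≤ t) :
    |axg s t * (-(4 * s) - 4 * t) - exp (-(4 * s * t)) * (-(4 * s))| ≤ 6 / s * exp (-(2 * s * t)) := by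
  have hs0 : 0 < s := by linarith
  set x := 2 * s * t with hx
  have hx0 : 0 ≤ x := by positivity
  obtain ⟨p1, p2⟩ := ax_pow_exp hx0
  have hE : exp (-(4 * s * t)) = exp (-x) * exp (-x) := by rw [← exp_add]; congr 1; rw [hx]; ring
  have hg : axg s t = exp (-(4 * s * t)) * exp (-(2 * t ^ 2)) := by
    unfold axg; rw [← exp_add]; congr 1
  have q1 : 1 - exp (-(2 * t ^ 2)) ≤ 2 * t ^ 2 := ax_one_sub_exp
  have q2 : exp (-(2 * t ^ 2)) ≤ 1 := exp_le_one_iff.2 (by nlinarith [sq_nonneg t])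
  set q := exp (-(2 * t ^ 2)) with hq
  have q0 : 0 < q := exp_pos _
  have hp := exp_pos (-x)
  have e : axg s t * (-(4 * s) - 4 * t) - exp (-(4 * s * t)) * (-(4 * s)) =
      exp (-x) * (exp (-x) * (4 * s * (1 - q) - 4 * t * q)) := by
    rw [hg, hE]; ring
  rw [e, abs_mul, abs_of_pos hp, mul_comm]
  apply mul_le_mul_of_nonneg_right _ hp.le
  rw [abs_mul, abs_of_pos hp]
  have hb : |4 * s * (1 - q) - 4 * t * q| ≤ 8 * s * t ^ 2 + 4 * t := by
    have r1 : 0 ≤ 4 * s * (1 - q) := by nlinarith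
    have r2 : 4 * s * (1 - q) ≤ 4 * s * (2 * t ^ 2) := mul_le_mul_of_nonneg_left q1 (by positivity)
    have r3 : 0 ≤ 4 * t * q := by positivity
    have r4 : 4 * t * q ≤ 4 * t := by nlinarith
    have r5 : 0 ≤ 8 * s * t ^ 2 := by positivity
    rw [abs_le]; constructor <;> nlinarith
  calc exp (-x) * |4 * s * (1 - q) - 4 * t * q| ≤ exp (-x) * (8 * s * t ^ 2 + 4 * t) :=
        mul_le_mul_of_nonneg_left hb hp.le
    _ = 2 / s * (x ^ 2 * exp (-x)) + 2 / s * (x * exp (-x)) := by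
        rw [hx]; field_simp; ring
    _ ≤ 2 / s * 2 + 2 / s * 1 := by gcongr
    _ = 6 / s := by ring

lemma axd_lip {s t₁ t₂ : ℝ} (hs : 1 ≤ s) (h2 : 0 ≤ t₂) (h12 : t₂ ≤ t₁) :
    |axd s t₁ - axd s t₂| ≤ 6 / s * exp (-(2 * s * t₂)) * (t₁ - t₂) := by
  have hs0 : 0 < s := by linarith
  have := (convex_Ici t₂).norm_image_sub_le_of_norm_hasDerivWithin_le (f := axd s)
    (f' := fun t => axg s t * (-(4 * s) - 4 * t) - exp (-(4 * s * t)) * (-(4 * s)))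
    (C := 6 / s * exp (-(2 * s * t₂))) (x := t₂) (y := t₁)
    (fun w _ => (axd_deriv s w).hasDerivWithinAt) ?_ (Set.mem_Ici.2 le_rfl) (Set.mem_Ici.2 h12)
  · rw [Real.norm_eq_abs, Real.norm_eq_abs, abs_of_nonneg (sub_nonneg.2 h12)] at this
    exact this
  · intro w hw
    have hw' : t₂ ≤ w := hw
    refine (axd_deriv_bound hs (h2.trans hw')).trans ?_
    apply mul_le_mul_of_nonneg_left _ (by positivity)
    apply exp_le_exp.2
    nlinarith

noncomputable def axF (s t₁ t₂ : ℝ) : ℝ :=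
  (1 / (t₁ - t₂)) * (axg s t₁ * (erf (t₁ - t₂) + erf (√2 * (t₂ - -s))) +
    axg s t₂ * (erf (t₁ - t₂) - erf (√2 * (t₁ - -s))))

noncomputable def axMain (s t₁ t₂ : ℝ) : ℝ := -exp (-(4 * s * t₁)) * axpsi (4 * s) (t₁ - t₂)

lemma ax_R_bound {s t₁ t₂ : ℝ} (hs : 1 ≤ s) (h2 : 0 < t₂) (h12 : t₂ < t₁) :
    |axg s t₂ * erfc (√2 * (t₁ - -s)) - axg s t₁ * erfc (√2 * (t₂ - -s))|
      ≤ 2 * exp (-(4 * s * t₁)) * (t₁ - t₂) := by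
  have hM : ∀ t, erfc (√2 * (t - -s)) = axM (√2 * (t - -s)) * (exp (-2 * s ^ 2) * axg s t) := by
    intro t
    rw [← axg_eq]
    unfold axM
    have e : exp ((√2 * (t - -s)) ^ 2) * exp (-2 * (t - -s) ^ 2) = 1 := by
      rw [← exp_add, mul_pow, sq_sqrt (by norm_num : (0:ℝ) ≤ 2)]
      ring_nf; simp
    rw [mul_assoc, e, mul_one]
  have s2 : √2 ≤ 3 / 2 := by
    rw [Real.sqrt_le_left (by norm_num)]; norm_num
  have s0 : 0 ≤ √2 := sqrt_nonneg 2
  have e : axg s t₂ * erfc (√2 * (t₁ - -s)) - axg s t₁ * erfc (√2 * (t₂ - -s)) =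
      exp (-2 * s ^ 2) * axg s t₂ * axg s t₁ * (axM (√2 * (t₁ - -s)) - axM (√2 * (t₂ - -s))) := by
    rw [hM t₁, hM t₂]; ring
  have hl := axM_lip (x := √2 * (t₁ - -s)) (z := √2 * (t₂ - -s))
    (mul_nonneg s0 (by linarith)) (mul_nonneg s0 (by linarith))
  have e2 : √2 * (t₁ - -s) - √2 * (t₂ - -s) = √2 * (t₁ - t₂) := by ring
  rw [e2, abs_of_nonneg (mul_nonneg s0 (by linarith))] at hl
  have hu : 0 < t₁ - t₂ := by linarith
  have hl' : |axM (√2 * (t₁ - -s)) - axM (√2 * (t₂ - -s))| ≤ 2 * (t₁ - t₂) := by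
    have := mul_le_mul_of_nonneg_right s2 hu.le
    linarith
  have g1 : axg s t₁ ≤ exp (-(4 * s * t₁)) := axg_le _ _
  have g2 : axg s t₂ ≤ 1 := (axg_le _ _).trans (exp_le_one_iff.2 (by
    have : 0 < 4 * s * t₂ := by positivity
    linarith))
  have g3 : exp (-2 * s ^ 2) ≤ 1 := exp_le_one_iff.2 (by nlinarith)
  have p1 := axg_pos s t₁
  have p2 := axg_pos s t₂
  have p3 := exp_pos (-2 * s ^ 2)
  rw [e, abs_mul, abs_of_pos (by positivity)]
  calc _ ≤ (1 * 1 * exp (-(4 * s * t₁))) * (2 * (t₁ - t₂)) := by gcongr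
    _ = _ := by ring

lemma axF_sub_main {s t₁ t₂ : ℝ} (hs : 1 ≤ s) (h2 : 0 < t₂) (h12 : t₂ < t₁) :
    |axF s t₁ t₂ - axMain s t₁ t₂| ≤
      6 * exp (-(4 * s * t₁)) + 12 / s * exp (-t₁) * exp (-(s * t₂)) := by
  have hs0 : 0 < s := by linarith
  have hu : 0 < t₁ - t₂ := by linarith
  have e : axF s t₁ t₂ - axMain s t₁ t₂ =
      (axg s t₂ * erfc (√2 * (t₁ - -s)) - axg s t₁ * erfc (√2 * (t₂ - -s))) / (t₁ - t₂)
      + 2 * axg s t₁ * (erf (t₁ - t₂) / (t₁ - t₂))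
      + erfc (t₁ - t₂) * (axd s t₁ - axd s t₂) / (t₁ - t₂) := by
    have e1 : exp (-(4 * s * t₁)) * exp (4 * s * (t₁ - t₂)) = exp (-(4 * s * t₂)) := by
      rw [← exp_add]; congr 1; ring
    have e2 : axMain s t₁ t₂ = erfc (t₁ - t₂) * (exp (-(4 * s * t₁)) - exp (-(4 * s * t₂))) / (t₁ - t₂) := by
      unfold axMain axpsi
      rw [← e1]; ring
    rw [e2]
    unfold axF axd erfc
    ring
  have b1 : |(axg s t₂ * erfc (√2 * (t₁ - -s)) - axg s t₁ * erfc (√2 * (t₂ - -s))) / (t₁ - t₂)|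
      ≤ 2 * exp (-(4 * s * t₁)) := by
    rw [abs_div, abs_of_pos hu, div_le_iff₀ hu]
    exact ax_R_bound hs h2 h12
  have b2 : |2 * axg s t₁ * (erf (t₁ - t₂) / (t₁ - t₂))| ≤ 4 * exp (-(4 * s * t₁)) := by
    have p1 := axg_pos s t₁
    rw [abs_mul, abs_of_pos (by positivity)]
    have := ax_erf_div_bound hu
    calc _ ≤ 2 * exp (-(4 * s * t₁)) * 2 := by
          have := axg_le s t₁
          gcongr
      _ = _ := by ring
  have b3 : |erfc (t₁ - t₂) * (axd s t₁ - axd s t₂) / (t₁ - t₂)| ≤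
      12 / s * exp (-t₁) * exp (-(s * t₂)) := by
    have c0 := ax_erfc_nonneg (t₁ - t₂)
    rw [abs_div, abs_of_pos hu, div_le_iff₀ hu, abs_mul, abs_of_nonneg c0]
    calc _ ≤ (2 * exp (-(t₁ - t₂))) * (6 / s * exp (-(2 * s * t₂)) * (t₁ - t₂)) :=
          mul_le_mul (ax_erfc_le_exp hu.le) (axd_lip hs h2.le h12.le) (abs_nonneg _) (by positivity)
      _ = 12 / s * exp (-(t₁ - t₂) + -(2 * s * t₂)) * (t₁ - t₂) := by rw [exp_add]; ring
      _ ≤ 12 / s * exp (-t₁ + -(s * t₂)) * (t₁ - t₂) := by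
          have : -(t₁ - t₂) + -(2 * s * t₂) ≤ -t₁ + -(s * t₂) := by nlinarith
          gcongr
      _ = _ := by rw [exp_add]; ring
  rw [e]
  refine (abs_add_le _ _).trans ?_
  have := abs_add_le ((axg s t₂ * erfc (√2 * (t₁ - -s)) - axg s t₁ * erfc (√2 * (t₂ - -s))) / (t₁ - t₂))
    (2 * axg s t₁ * (erf (t₁ - t₂) / (t₁ - t₂)))
  linarith

lemma axF_measurable (s : ℝ) : Measurable (fun p : ℝ × ℝ => axF s p.1 p.2) := by
  have h := ax_erf_measurable
  unfold axF axg
  fun_prop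

lemma axMain_measurable (s : ℝ) : Measurable (fun p : ℝ × ℝ => axMain s p.1 p.2) := by
  have h := axpsi_measurable (4 * s)
  unfold axMain
  fun_prop

lemma ax_inner_measurable {F : ℝ → ℝ → ℝ} (hF : Measurable (fun p : ℝ × ℝ => F p.1 p.2)) :
    StronglyMeasurable (fun t => ∫ x in Set.Ioo (0:ℝ) t, F t x) := by
  have hS : MeasurableSet {p : ℝ × ℝ | 0 < p.2 ∧ p.2 < p.1} :=
    (measurableSet_lt measurable_const measurable_snd).inter (measurableSet_lt measurable_snd measurable_fst)
  have h := ((hF.indicator hS).stronglyMeasurable).integral_prod_right' (ν := (volume : Measure ℝ))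
  convert h using 2 with t
  rw [← integral_indicator measurableSet_Ioo]
  congr 1

lemma axMain_inner_integrable {s : ℝ} (hs : 1 ≤ s) (t : ℝ) :
    IntegrableOn (fun x => axMain s t x) (Set.Ioo 0 t) := by
  have hs0 : 0 < 4 * s := by linarith
  have hm : Measurable (fun x => axMain s t x) := (axMain_measurable s).comp (measurable_const.prodMk measurable_id)
  refine Measure.integrableOn_of_bounded (M := exp (-(4 * s * t)) * (4 * s * exp ((4 * s + 1) ^ 2 / 4))) (by simp) hm.aestronglyMeasurable ?_
  filter_upwards [ae_restrict_mem measurableSet_Ioo] with x hx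
  unfold axMain
  rw [norm_mul, norm_neg, Real.norm_eq_abs, Real.norm_eq_abs, abs_of_pos (exp_pos _)]
  have hx1 : 0 < t - x := by linarith [hx.2]
  have h := axpsi_bound hs0 hx1
  have h1 : exp (-(1 * (t - x))) ≤ 1 := exp_le_one_iff.2 (by linarith)
  apply mul_le_mul_of_nonneg_left _ (exp_pos _).le
  exact h.trans (mul_le_of_le_one_right (by positivity) h1)

lemma axMain_inner {s t : ℝ} (ht : 0 < t) :
    ∫ x in Set.Ioo (0:ℝ) t, axMain s t x = -(axP (4 * s) t * exp (-(4 * s * t))) := by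
  unfold axMain axP
  rw [integral_const_mul, ← integral_Ioc_eq_integral_Ioo, ← intervalIntegral.integral_of_le ht.le,
    intervalIntegral.integral_comp_sub_left (fun u => axpsi (4 * s) u) t]
  simp; ring

lemma axDif_inner {s t : ℝ} (hs : 1 ≤ s) (ht : 0 < t) :
    |(∫ x in Set.Ioo (0:ℝ) t, axF s t x) - ∫ x in Set.Ioo (0:ℝ) t, axMain s t x| ≤
      6 * (t * exp (-(4 * s * t))) + 12 / s ^ 2 * exp (-(1 * t)) := by
  have hs0 : 0 < s := by linarith
  have iB : IntegrableOn (fun x => 6 * exp (-(4 * s * t)) + 12 / s * exp (-t) * exp (-(s * x))) (Set.Ioo 0 t) := by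
    have : Continuous (fun x => 6 * exp (-(4 * s * t)) + 12 / s * exp (-t) * exp (-(s * x))) := by fun_prop
    exact (this.integrableOn_Icc (a := 0) (b := t)).mono_set Set.Ioo_subset_Icc_self
  have hmD : Measurable (fun x => axF s t x - axMain s t x) :=
    ((axF_measurable s).comp (measurable_const.prodMk measurable_id)).sub
    ((axMain_measurable s).comp (measurable_const.prodMk measurable_id))
  have hb : ∀ᵐ x ∂(volume.restrict (Set.Ioo 0 t)), ‖axF s t x - axMain s t x‖ ≤
      6 * exp (-(4 * s * t)) + 12 / s * exp (-t) * exp (-(s * x)) := by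
    filter_upwards [ae_restrict_mem measurableSet_Ioo] with x hx
    exact axF_sub_main hs hx.1 hx.2
  have iD : IntegrableOn (fun x => axF s t x - axMain s t x) (Set.Ioo 0 t) :=
    Integrable.mono' iB hmD.aestronglyMeasurable hb
  have iM := axMain_inner_integrable hs t
  have iF : IntegrableOn (fun x => axF s t x) (Set.Ioo 0 t) := by
    refine (iD.add iM).congr ?_
    filter_upwards with x
    exact sub_add_cancel _ _
  rw [← integral_sub iF iM, ← Real.norm_eq_abs]
  refine (norm_integral_le_of_norm_le iB hb).trans ?_
  have iE : IntegrableOn (fun x => exp (-(s * x))) (Set.Ioo 0 t) :=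
    (ax_integrable_exp hs0).mono_set Set.Ioo_subset_Ioi_self
  have iC : IntegrableOn (fun _ : ℝ => 6 * exp (-(4 * s * t))) (Set.Ioo 0 t) :=
    integrableOn_const (by simp)
  rw [integral_add iC (iE.const_mul _), integral_const_mul (12 / s * exp (-t))]
  have h1 : ∫ x in Set.Ioo 0 t, exp (-(s * x)) ≤ 1 / s := by
    rw [← ax_int_exp hs0]
    apply setIntegral_mono_set (ax_integrable_exp hs0)
    · filter_upwards with x; positivity
    · exact Set.Ioo_subset_Ioi_self.eventuallyLE
  have h2 : ∫ x in Set.Ioo 0 t, 6 * exp (-(4 * s * t)) = 6 * (t * exp (-(4 * s * t))) := by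
    simp [ht.le]; ring
  rw [h2]
  gcongr 6 * (t * exp (-(4 * s * t))) + ?_
  calc _ ≤ 12 / s * exp (-t) * (1 / s) := by gcongr
    _ = _ := by rw [one_mul]; field_simp

lemma axF_outer {s : ℝ} (hs : 1 ≤ s) :
    |(∫ t in Set.Ioi (0:ℝ), ∫ x in Set.Ioo (0:ℝ) t, axF s t x) + axL (4 * s) / (4 * s)| ≤ 13 / s ^ 2 := by
  have hs0 : 0 < 4 * s := by linarith
  set IF := fun t => ∫ x in Set.Ioo (0:ℝ) t, axF s t x with hIF
  set IM := fun t => ∫ x in Set.Ioo (0:ℝ) t, axMain s t x with hIM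
  have iM : IntegrableOn IM (Set.Ioi 0) := by
    refine (axP_integrable hs0).neg.congr ?_
    filter_upwards [ae_restrict_mem measurableSet_Ioi] with t ht
    exact (axMain_inner ht).symm
  have vM : ∫ t in Set.Ioi (0:ℝ), IM t = -(axL (4 * s) / (4 * s)) := by
    rw [← axP_integral hs0, ← integral_neg]
    apply setIntegral_congr_fun measurableSet_Ioi
    intro t ht
    exact axMain_inner ht
  have iB : IntegrableOn (fun t => 6 * (t * exp (-(4 * s * t))) + 12 / s ^ 2 * exp (-(1 * t))) (Set.Ioi 0) :=
    ((ax_integrable_mul_exp hs0).const_mul _).add ((ax_integrable_exp one_pos).const_mul _)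
  have vB : ∫ t in Set.Ioi (0:ℝ), (6 * (t * exp (-(4 * s * t))) + 12 / s ^ 2 * exp (-(1 * t))) =
      6 * (1 / (4 * s) ^ 2) + 12 / s ^ 2 * (1 / 1) := by
    rw [integral_add ((ax_integrable_mul_exp hs0).const_mul _) ((ax_integrable_exp one_pos).const_mul _),
      integral_const_mul, integral_const_mul, ax_int_mul_exp hs0, ax_int_exp one_pos]
  have hb : ∀ᵐ t ∂(volume.restrict (Set.Ioi (0:ℝ))), ‖IF t - IM t‖ ≤
      6 * (t * exp (-(4 * s * t))) + 12 / s ^ 2 * exp (-(1 * t)) := by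
    filter_upwards [ae_restrict_mem measurableSet_Ioi] with t ht
    exact axDif_inner hs ht
  have iD : IntegrableOn (fun t => IF t - IM t) (Set.Ioi 0) :=
    Integrable.mono' iB ((ax_inner_measurable (axF_measurable s)).sub
      (ax_inner_measurable (axMain_measurable s))).aestronglyMeasurable hb
  have iF : IntegrableOn IF (Set.Ioi 0) := by
    refine (iD.add iM).congr ?_
    filter_upwards with x
    exact sub_add_cancel _ _
  have h := norm_integral_le_of_norm_le iB hb
  rw [integral_sub iF iM, vM, vB, sub_neg_eq_add, Real.norm_eq_abs] at h
  refine h.trans ?_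
  have : 0 < s ^ 2 := by nlinarith
  rw [le_div_iff₀ this]
  have e : (6 * (1 / (4 * s) ^ 2) + 12 / s ^ 2 * (1 / 1)) * s ^ 2 = 6 / 16 + 12 := by
    have : s ≠ 0 := by linarith
    field_simp
    norm_num
  rw [e]; norm_num

lemma axA4_eq (s : ℝ) : A₄ (-s) = -(1 / √(2 * π)) *
    (exp (-2 * s ^ 2) * ∫ t in Set.Ioi (0:ℝ), ∫ x in Set.Ioo (0:ℝ) t, axF s t x) := by
  unfold A₄
  rw [← integral_const_mul]
  simp_rw [← integral_const_mul]
  congr 2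
  ext t
  congr 1
  ext x
  rw [axg_eq, axg_eq]
  unfold axF
  ring

lemma axA4_asymp {s : ℝ} (hs : 1 ≤ s) :
    |√(2 * π) * exp (2 * s ^ 2) * A₄ (-s) - (log s + log 2 + eulerMascheroniConstant / 2) / (4 * s)| ≤ 14 / s ^ 2 := by
  have hs0 : 0 < s := by linarith
  have hL := axL_asymp (a := 4 * s) (by linarith)
  have hF := axF_outer hs
  have hp : √(2 * π) ≠ 0 := by positivity
  have he : exp (2 * s ^ 2) * exp (-2 * s ^ 2) = 1 := by rw [← exp_add]; simp
  rw [axA4_eq]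
  set I := ∫ t in Set.Ioi (0:ℝ), ∫ x in Set.Ioo (0:ℝ) t, axF s t x
  have e1 : √(2 * π) * exp (2 * s ^ 2) * (-(1 / √(2 * π)) * (exp (-2 * s ^ 2) * I)) = -I := by
    have e0 : √(2 * π) * (1 / √(2 * π)) = 1 := by field_simp
    linear_combination (-I) * he - exp (2 * s ^ 2) * exp (-2 * s ^ 2) * I * e0
  rw [e1]
  have hl : log (4 * s) = 2 * log 2 + log s := by
    rw [log_mul (by norm_num) hs0.ne', show (4:ℝ) = 2 ^ 2 by norm_num, log_pow]; push_cast; ring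
  rw [hl] at hL
  have e2 : -I - (log s + log 2 + eulerMascheroniConstant / 2) / (4 * s) =
      -(I + axL (4 * s) / (4 * s)) +
      (axL (4 * s) - (2 * log 2 + log s + eulerMascheroniConstant / 2 - log 2)) / (4 * s) := by ring
  rw [e2]
  refine (abs_add_le _ _).trans ?_
  rw [abs_neg, abs_div, abs_of_pos (show 0 < 4 * s by linarith)]
  have h3 : |axL (4 * s) - (2 * log 2 + log s + eulerMascheroniConstant / 2 - log 2)| / (4 * s) ≤ 1 / s ^ 2 := by
    calc _ ≤ 2 / (4 * s) / (4 * s) := by gcongr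
      _ = (1 / 8) / s ^ 2 := by field_simp; norm_num
      _ ≤ 1 / s ^ 2 := by gcongr; norm_num
  calc _ ≤ 13 / s ^ 2 + 1 / s ^ 2 := add_le_add hF h3
    _ = _ := by ring

lemma ax_laplace {f : ℝ → ℝ} {a c K : ℝ} (ha : 0 < a) (hf : Measurable f)
    (h : ∀ t > 0, |f t - c * exp (-(a * t))| ≤ K * (t * exp (-(a * t)))) :
    |(∫ t in Set.Ioi (0:ℝ), f t) - c * (1 / a)| ≤ K * (1 / a ^ 2) := by
  have iE := (ax_integrable_exp ha).const_mul c
  have iB := (ax_integrable_mul_exp ha).const_mul K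
  have iD : IntegrableOn (fun t => f t - c * exp (-(a * t))) (Set.Ioi 0) :=
    ax_integrable_of_bound (by fun_prop) iB h
  have iF : IntegrableOn f (Set.Ioi 0) := by
    refine (iD.add iE).congr ?_
    filter_upwards with x
    exact sub_add_cancel _ _
  have hb : ∀ᵐ t ∂(volume.restrict (Set.Ioi (0:ℝ))), ‖f t - c * exp (-(a * t))‖ ≤
      K * (t * exp (-(a * t))) := by
    filter_upwards [ae_restrict_mem measurableSet_Ioi] with t ht
    exact h t ht
  have := norm_integral_le_of_norm_le iB hb
  rw [integral_sub iF iE, integral_const_mul, integral_const_mul, ax_int_exp ha, ax_int_mul_exp ha] at this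
  exact this

lemma axg_measurable (s : ℝ) : Measurable (axg s) := by unfold axg; fun_prop

lemma axA1_asymp {s : ℝ} (hs : 1 ≤ s) :
    |√(2 * π) * exp (2 * s ^ 2) * A₁ (-s) + 1 / (8 * s)| ≤ 1 / s ^ 2 := by
  have hs0 : 0 < s := by linarith
  have hmc := ax_erfc_measurable
  have hmg := axg_measurable s
  have hp : √(2 * π) ≠ 0 := by positivity
  have he : exp (2 * s ^ 2) * exp (-2 * s ^ 2) = 1 := by rw [← exp_add]; simp
  have e0 : A₁ (-s) = -(1 / (2 * √(2 * π))) * (exp (-2 * s ^ 2) * ∫ t in Set.Ioi (0:ℝ), axg s t * erfc t) := by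
    unfold A₁
    rw [← integral_const_mul (exp (-2 * s ^ 2))]
    congr 1
    apply integral_congr_ae
    filter_upwards with t
    rw [axg_eq]; ring
  have h := ax_laplace (f := fun t => axg s t * erfc t) (a := 4 * s) (c := 1) (K := 4) (by linarith)
    (by fun_prop) ?_
  · rw [e0]
    set I := ∫ t in Set.Ioi (0:ℝ), axg s t * erfc t
    have e1 : √(2 * π) * (1 / (2 * √(2 * π))) = 1 / 2 := by field_simp
    have e2 : √(2 * π) * exp (2 * s ^ 2) * (-(1 / (2 * √(2 * π))) * (exp (-2 * s ^ 2) * I)) + 1 / (8 * s)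
        = -(1 / 2) * (I - 1 * (1 / (4 * s))) := by
      have e3 : 1 / (8 * s) = (1 / 2) * (1 / (4 * s)) := by field_simp; norm_num
      rw [e3]
      linear_combination (-I / 2) * he - exp (2 * s ^ 2) * exp (-2 * s ^ 2) * I * e1
    rw [e2, abs_mul]
    calc _ ≤ |-(1 / 2 : ℝ)| * (4 * (1 / (4 * s) ^ 2)) := mul_le_mul_of_nonneg_left h (abs_nonneg _)
      _ = (1 / 8) / s ^ 2 := by rw [abs_neg, abs_of_pos (by norm_num)]; field_simp; norm_num
      _ ≤ 1 / s ^ 2 := by gcongr; norm_num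
  · intro t ht
    have hg : axg s t = exp (-(4 * s * t)) * exp (-(2 * t ^ 2)) := by
      unfold axg; rw [← exp_add]; congr 1
    have q1 : 1 - exp (-(2 * t ^ 2)) ≤ 2 * t ^ 2 := ax_one_sub_exp
    have q2 : exp (-(2 * t ^ 2)) ≤ 1 := exp_le_one_iff.2 (by nlinarith [sq_nonneg t])
    have q0 := exp_pos (-(2 * t ^ 2))
    have q3 : 1 - exp (-(2 * t ^ 2)) ≤ 2 * t := by
      rcases le_total t 1 with h | h <;> nlinarith
    have c0 := ax_erfc_nonneg t
    have c1 := ax_erfc_le_one (le_of_lt ht)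
    have c2 := ax_erf_le (le_of_lt ht)
    have c3 : erfc t = 1 - erf t := rfl
    have p := exp_pos (-(4 * s * t))
    have e : axg s t * erfc t - 1 * exp (-(4 * s * t)) =
      exp (-(4 * s * t)) * (exp (-(2 * t ^ 2)) * erfc t - 1) := by rw [hg]; ring
    rw [e, abs_mul, abs_of_pos p]
    have : |exp (-(2 * t ^ 2)) * erfc t - 1| ≤ 4 * t := by
      rw [abs_le]; constructor <;> nlinarith
    calc _ ≤ exp (-(4 * s * t)) * (4 * t) := mul_le_mul_of_nonneg_left this p.le
      _ = _ := by ring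

lemma axA2_asymp {s : ℝ} (hs : 1 ≤ s) :
    |√(2 * π) * exp (2 * s ^ 2) * A₂ (-s)| ≤ 1 / s ^ 2 := by
  have hs0 : 0 < s := by linarith
  have hmc := ax_erfc_measurable
  have hmg := axg_measurable s
  have hp : √(2 * π) ≠ 0 := by positivity
  have he : exp (2 * s ^ 2) * exp (-2 * s ^ 2) = 1 := by rw [← exp_add]; simp
  have e0 : A₂ (-s) = (1 / √(2 * π)) * (exp (-2 * s ^ 2) * ∫ t in Set.Ioi (0:ℝ),
      axg s t * t * (exp (-t ^ 2) / √π - t * erfc t)) := by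
    unfold A₂
    rw [← integral_const_mul (exp (-2 * s ^ 2))]
    congr 1
    apply integral_congr_ae
    filter_upwards with t
    rw [axg_eq]; ring
  have h := ax_laplace (f := fun t => axg s t * t * (exp (-t ^ 2) / √π - t * erfc t))
    (a := 4 * s) (c := 0) (K := 1) (by linarith) (by fun_prop) ?_
  · rw [e0]
    set I := ∫ t in Set.Ioi (0:ℝ), axg s t * t * (exp (-t ^ 2) / √π - t * erfc t)
    have e1 : √(2 * π) * (1 / √(2 * π)) = 1 := by field_simp
    have e2 : √(2 * π) * exp (2 * s ^ 2) * ((1 / √(2 * π)) * (exp (-2 * s ^ 2) * I))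
        = I - 0 * (1 / (4 * s)) := by
      linear_combination I * he + exp (2 * s ^ 2) * exp (-2 * s ^ 2) * I * e1
    rw [e2]
    refine h.trans ?_
    calc _ = (1 / 16) / s ^ 2 := by field_simp; norm_num
      _ ≤ 1 / s ^ 2 := by gcongr; norm_num
  · intro t ht
    have ht0 : 0 < t := ht
    have c0 := ax_erfc_nonneg t
    have c1 := ax_mills1 ht0
    have c2 : t * erfc t ≤ exp (-t ^ 2) / √π := by
      calc t * erfc t ≤ t * (exp (-t ^ 2) / √π * (1 / t)) := mul_le_mul_of_nonneg_left c1 ht0.le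
        _ = _ := by field_simp
    have c3 : exp (-t ^ 2) / √π ≤ 1 := by
      have := ax_sqrtpi
      rw [div_le_one (by linarith)]
      have : exp (-t ^ 2) ≤ 1 := exp_le_one_iff.2 (by nlinarith)
      linarith
    have c4 : 0 ≤ t * erfc t := by positivity
    have pg := axg_pos s t
    rw [zero_mul, sub_zero, abs_of_nonneg (mul_nonneg (by positivity) (by linarith))]
    calc _ ≤ axg s t * t * 1 := by gcongr; linarith
      _ ≤ exp (-(4 * s * t)) * t * 1 := by gcongr; exact axg_le _ _
      _ = _ := by ring

lemma axA3_algebra {s X q : ℝ} (hs : 1 ≤ s) (X0 : 0 ≤ X) (q0 : 0 < q) (q1 : q ≤ 1 / (2 * s ^ 2))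
    (lo' : 1 / s - 1 / (4 * s ^ 3) ≤ X) (hi' : X ≤ 1 / s - 1 / (4 * s ^ 3) + 3 / (16 * s ^ 5))
    (hi1 : X ≤ 1 / s) :
    |(1 / 4) * X * (s * q + (1 / 4 + s ^ 2) * (2 - X * q)) - s / 2| ≤ 2 / s ^ 2 := by
  have hs0 : 0 < s := by linarith
  have hXs : X * s ≤ 1 := by
    calc X * s ≤ 1 / s * s := by gcongr
      _ = 1 := by field_simp
  have hXs0 : 0 ≤ X * s := by positivity
  have hX1 : X ≤ 1 := by nlinarith
  have t1 : |(1 / 4) * (X * s) * q - (1 / 4) * (X ^ 2 / 4 + (X * s) ^ 2) * q| ≤ 1 / s ^ 2 := by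
    have b1 : X ^ 2 ≤ 1 := by nlinarith
    have b2 : (X * s) ^ 2 ≤ 1 := by nlinarith
    have b3 := sq_nonneg X
    have b4 := sq_nonneg (X * s)
    have e : 1 / s ^ 2 = 2 * (1 / (2 * s ^ 2)) := by field_simp
    have e' : (1 / 4) * (X * s) * q - (1 / 4) * (X ^ 2 / 4 + (X * s) ^ 2) * q =
      ((1 / 4) * (X * s) - (1 / 4) * (X ^ 2 / 4 + (X * s) ^ 2)) * q := by ring
    rw [e', abs_mul, abs_of_pos q0]
    have : |(1 / 4) * (X * s) - (1 / 4) * (X ^ 2 / 4 + (X * s) ^ 2)| ≤ 1 := by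
      rw [abs_le]; constructor <;> nlinarith
    calc _ ≤ 1 * q := by gcongr
      _ ≤ _ := by rw [e]; linarith
  have t2 : |(1 / 2) * X * (1 / 4 + s ^ 2) - s / 2| ≤ 1 / s ^ 2 := by
    obtain ⟨δ, hδ⟩ : ∃ δ, X = 1 / s - 1 / (4 * s ^ 3) + δ := ⟨X - (1 / s - 1 / (4 * s ^ 3)), by ring⟩
    have d0 : 0 ≤ δ := by linarith
    have d1 : δ ≤ 3 / (16 * s ^ 5) := by linarith
    have e : (1 / 2) * X * (1 / 4 + s ^ 2) - s / 2 = -(1 / (32 * s ^ 3)) + (1 / 2) * δ * (1 / 4 + s ^ 2) := by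
      rw [hδ]; field_simp; ring
    have d2 : (1 / 2) * δ * (1 / 4 + s ^ 2) ≤ 1 / s ^ 2 := by
      calc _ ≤ (1 / 2) * (3 / (16 * s ^ 5)) * (s ^ 2 + s ^ 2) := by
            apply mul_le_mul (by linarith) (by nlinarith) (by positivity) (by positivity)
        _ = 3 / 16 / s ^ 3 := by field_simp; ring
        _ ≤ 1 / s ^ 2 := by
            rw [div_le_div_iff₀ (by positivity) (by positivity)]
            nlinarith [pow_pos hs0 2]
    have d3 : 0 ≤ (1 / 2) * δ * (1 / 4 + s ^ 2) := by positivity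
    have d4 : 1 / (32 * s ^ 3) ≤ 1 / s ^ 2 := by
      rw [div_le_div_iff₀ (by positivity) (by positivity)]
      nlinarith [pow_pos hs0 2]
    have d5 : 0 < 1 / (32 * s ^ 3) := by positivity
    rw [e, abs_le]; constructor <;> linarith
  have e : (1 / 4) * X * (s * q + (1 / 4 + s ^ 2) * (2 - X * q)) - s / 2 =
      ((1 / 4) * (X * s) * q - (1 / 4) * (X ^ 2 / 4 + (X * s) ^ 2) * q) +
      ((1 / 2) * X * (1 / 4 + s ^ 2) - s / 2) := by ring
  rw [e]
  refine (abs_add_le _ _).trans ((add_le_add t1 t2).trans (le_of_eq ?_))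
  ring

lemma axA3_asymp {s : ℝ} (hs : 1 ≤ s) :
    |√(2 * π) * exp (2 * s ^ 2) * A₃ (-s) - s / 2| ≤ 2 / s ^ 2 := by
  have hs0 : 0 < s := by linarith
  have hp : 0 < √(2 * π) := by positivity
  have hp1 : 1 ≤ √(2 * π) := by
    rw [Real.one_le_sqrt]; have := Real.pi_gt_three; linarith
  have he : exp (2 * s ^ 2) * exp (-2 * s ^ 2) = 1 := by rw [← exp_add]; simp
  have hx : 0 < √2 * s := by positivity
  have s2 : √2 ^ 2 = 2 := sq_sqrt (by norm_num)
  have hE : exp (-(√2 * s) ^ 2) = exp (-2 * s ^ 2) := by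
    congr 1; rw [mul_pow, s2]; ring
  have hpi : 0 < √π := by positivity
  have h2pi : √(2 * π) = √2 * √π := Real.sqrt_mul (by norm_num) _
  have hr2 : 0 < √2 := by positivity
  -- scaled erfc
  set X := √(2 * π) * exp (2 * s ^ 2) * erfc (√2 * s) with hX
  have lo := ax_mills2 hx
  have hi := ax_mills3 hx
  rw [hE] at lo hi
  have s3 : √2 ^ 3 = 2 * √2 := by rw [pow_succ, s2]
  have s5 : √2 ^ 5 = 4 * √2 := by rw [show √2 ^ 5 = (√2 ^ 2) ^ 2 * √2 by ring, s2]; ring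
  have conv : ∀ z, √(2 * π) * exp (2 * s ^ 2) * (exp (-2 * s ^ 2) / √π * z) = √2 * z := by
    intro z
    have e1 : √(2 * π) / √π = √2 := by rw [h2pi]; field_simp
    linear_combination (√(2 * π) / √π * z) * he + z * e1
  have lo' : 1 / s - 1 / (4 * s ^ 3) ≤ X := by
    have := mul_le_mul_of_nonneg_left lo (show 0 ≤ √(2 * π) * exp (2 * s ^ 2) by positivity)
    rw [conv] at this
    refine le_trans (le_of_eq ?_) this
    rw [mul_pow, s3]; field_simp; ring
  have hi' : X ≤ 1 / s - 1 / (4 * s ^ 3) + 3 / (16 * s ^ 5) := by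
    have := mul_le_mul_of_nonneg_left hi (show 0 ≤ √(2 * π) * exp (2 * s ^ 2) by positivity)
    rw [conv] at this
    refine le_trans this (le_of_eq ?_)
    rw [mul_pow, mul_pow, s3, s5]; field_simp; ring
  have hi1 : X ≤ 1 / s := by
    have := mul_le_mul_of_nonneg_left (ax_mills1 hx) (show 0 ≤ √(2 * π) * exp (2 * s ^ 2) by positivity)
    rw [hE, conv] at this
    refine le_trans this (le_of_eq ?_)
    field_simp
  have X0 : 0 ≤ X := by
    have := ax_erfc_nonneg (√2 * s)
    positivity
  set q := exp (-2 * s ^ 2) / √(2 * π) with hq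
  have q0 : 0 < q := by positivity
  have q1 : q ≤ 1 / (2 * s ^ 2) := by
    have h1 : q ≤ exp (-2 * s ^ 2) := div_le_self (exp_pos _).le hp1
    have h2 : exp (-2 * s ^ 2) ≤ 1 / (2 * s ^ 2) := by
      have h3 := add_one_le_exp (2 * s ^ 2)
      rw [show -2 * s ^ 2 = -(2 * s ^ 2) by ring, exp_neg, ← one_div]
      apply one_div_le_one_div_of_le (by positivity)
      linarith
    linarith
  have hc : erfc (√2 * s) = X * q := by
    rw [hX, hq]
    have e1 : √(2 * π) * (1 / √(2 * π)) = 1 := by field_simp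
    linear_combination (-erfc (√2 * s)) * he - erfc (√2 * s) * exp (2 * s ^ 2) * exp (-2 * s ^ 2) * e1
  have hA : √(2 * π) * exp (2 * s ^ 2) * A₃ (-s) =
      (1 / 4) * X * (s * q + (1 / 4 + s ^ 2) * (2 - X * q)) := by
    unfold A₃
    have e1 : erf (√2 * -s) = erfc (√2 * s) - 1 := by
      rw [mul_neg, ax_erf_neg]; unfold erfc; ring
    rw [e1, ← hc, hX, hq, neg_sq]
    ring
  rw [hA]
  have fin := axA3_algebra hs X0 q0 q1 lo' hi' hi1
  exact fin

/-- Full asymptotic expansion of `A` as `y → −∞`, with `γ` the Euler–Mascheroni constant. -/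
theorem A_asymptotic_expansion :
    ∃ C > (0 : ℝ), ∃ y₀ < (0 : ℝ), ∀ y ≤ y₀,
      abs (A y -
          (1 / (2 * Real.sqrt (2 * Real.pi))) * |y| * Real.exp (-2 * y ^ 2) -
          (1 / (4 * Real.sqrt (2 * Real.pi))) * (Real.log |y| / |y|) * Real.exp (-2 * y ^ 2) -
          (1 / (4 * Real.sqrt (2 * Real.pi))) *
            ((Real.eulerMascheroniConstant - 1) / 2 + Real.log 2) *
            Real.exp (-2 * y ^ 2) / |y|) ≤
        C * Real.exp (-2 * y ^ 2) / y ^ 2 := by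
  refine ⟨18, by norm_num, -1, by norm_num, ?_⟩
  intro y hy
  obtain ⟨s, rfl⟩ : ∃ s, y = -s := ⟨-y, by ring⟩
  have hs : 1 ≤ s := by linarith
  have hs0 : 0 < s := by linarith
  have hp : 0 < √(2 * π) := by positivity
  have hp1 : 1 ≤ √(2 * π) := by
    rw [Real.one_le_sqrt]; have := Real.pi_gt_three; linarith
  have he : exp (2 * s ^ 2) * exp (-2 * s ^ 2) = 1 := by rw [← exp_add]; simp
  rw [abs_neg, abs_of_pos hs0, neg_sq]
  have b1 := axA1_asymp hs
  have b2 := axA2_asymp hs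
  have b3 := axA3_asymp hs
  have b4 := axA4_asymp hs
  set W := √(2 * π) * exp (2 * s ^ 2) with hW
  set q := exp (-2 * s ^ 2) / √(2 * π) with hq
  have q0 : 0 < q := by positivity
  have hWq : q * W = 1 := by
    rw [hW, hq]
    have e1 : √(2 * π) * (1 / √(2 * π)) = 1 := by field_simp
    linear_combination he + exp (2 * s ^ 2) * exp (-2 * s ^ 2) * e1
  have q1 : q ≤ exp (-2 * s ^ 2) := div_le_self (exp_pos _).le hp1
  have hh : |(W * A₁ (-s) + 1 / (8 * s)) + W * A₂ (-s) + (W * A₃ (-s) - s / 2) +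
      (W * A₄ (-s) - (log s + log 2 + eulerMascheroniConstant / 2) / (4 * s))| ≤ 18 / s ^ 2 := by
    have e : 18 / s ^ 2 = 1 / s ^ 2 + 1 / s ^ 2 + 2 / s ^ 2 + 14 / s ^ 2 := by ring
    rw [e]
    refine (abs_add_le _ _).trans (add_le_add ((abs_add_le _ _).trans (add_le_add
      ((abs_add_le _ _).trans (add_le_add b1 b2)) b3)) b4)
  have e : A (-s) - (1 / (2 * √(2 * π))) * s * exp (-2 * s ^ 2) -
          (1 / (4 * √(2 * π))) * (log s / s) * exp (-2 * s ^ 2) -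
          (1 / (4 * √(2 * π))) * ((eulerMascheroniConstant - 1) / 2 + log 2) * exp (-2 * s ^ 2) / s =
      q * ((W * A₁ (-s) + 1 / (8 * s)) + W * A₂ (-s) + (W * A₃ (-s) - s / 2) +
      (W * A₄ (-s) - (log s + log 2 + eulerMascheroniConstant / 2) / (4 * s))) := by
    have e1 : q * ((W * A₁ (-s) + 1 / (8 * s)) + W * A₂ (-s) + (W * A₃ (-s) - s / 2) +
      (W * A₄ (-s) - (log s + log 2 + eulerMascheroniConstant / 2) / (4 * s))) =
      A (-s) + q * (1 / (8 * s) - s / 2 - (log s + log 2 + eulerMascheroniConstant / 2) / (4 * s)) := by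
      unfold A
      linear_combination (A₁ (-s) + A₂ (-s) + A₃ (-s) + A₄ (-s)) * hWq
    rw [e1, hq]
    field_simp
    ring
  rw [e, abs_mul, abs_of_pos q0]
  calc _ ≤ exp (-2 * s ^ 2) * (18 / s ^ 2) := by gcongr
    _ = _ := by ring
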